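/- (Bound of Color Frequencies.) For each n ∈ ℕ let d(n) ≥ 1 and let μ_n^(k) ∈ [0,1] for k = 1,…,d(n). Consider n nodes whose colors are independent random elements of {0,…,2^{d(n)}−1}, where the d(n) binary digits of each node's color are independent Bernoulli random variables, the k-th digit equal to 1 with probability μ_n^(k). Let V_c denote the (random) number of nodes of color c, let E_c := E[V_c] = n·∏_{k=1}^{d(n)} (μ_n^(k))^{c_k}(1−μ_n^(k))^{1−c_k}, let F := {c : E_c ≥ 1} and I := {c : E_c < 1}, and define the random variables m_F := max_{c∈F} V_c/E_c and m_I := max_{c∈I} V_c. Then P[ m_F ≤ log₂ n and m_I ≤ log₂ n ] → 1 as n → ∞. -/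

import Mathlib

open scoped Classical

/-- The color of node `i`: the natural number in `{0,…,2^d−1}` whose `k`-th most
significant binary digit is the `k`-th attribute bit `ω i k` of node `i`. -/
def colorOf {n d : ℕ} (ω : Fin n → Fin d → Bool) (i : Fin n) : ℕ :=
  ∑ k : Fin d, if ω i k then 2 ^ (d - 1 - (k : ℕ)) else 0

/-- `V_c`, the number of nodes having color `c` under the attribute
configuration `ω`. -/
def Vcount {n d : ℕ} (ω : Fin n → Fin d → Bool) (c : ℕ) : ℕ :=
  (Finset.univ.filter fun i => colorOf ω i = c).card

/-- The probability of the attribute configuration `ω` under the product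
measure in which all `n·d` attribute bits are independent and the `k`-th bit of
every node equals `1` with probability `μ k`. -/
noncomputable def bitWeight {n d : ℕ} (μ : ℕ → ℝ) (ω : Fin n → Fin d → Bool) : ℝ :=
  ∏ i : Fin n, ∏ k : Fin d, if ω i k then μ (k : ℕ) else 1 - μ (k : ℕ)

/-- `E_c = E[V_c] = n · ∏_{k=1}^d (μ⁽ᵏ⁾)^{c_k}(1−μ⁽ᵏ⁾)^{1−c_k}`, the expected
number of nodes of color `c`, where `c_k = ⌊c / 2^(d−1−k)⌋ mod 2`. -/
noncomputable def Ecol (n d : ℕ) (μ : ℕ → ℝ) (c : ℕ) : ℝ :=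
  (n : ℝ) * ∏ k ∈ Finset.range d,
    μ k ^ (c / 2 ^ (d - 1 - k) % 2) * (1 - μ k) ^ (1 - c / 2 ^ (d - 1 - k) % 2)

/-! Call a color `a` of expected count `E_a` overrepresented if `V_a > max 1 E_a * log₂ n`; for
frequent and for infrequent colors alike, this is the failure of the bound. As `V_a` is binomial,
`4 ^ V_a` has mean `(1 + 3 * E_a / n) ^ n ≤ exp (3 * E_a)`, and Markov's inequality for
`4 ^ V_a - 1` bounds the probability that `a` is overrepresented by `6 * exp 3 / n ^ 2 * E_a`.
Subtracting `1` is what produces the factor `E_a`: the expected counts sum to `n`, so the union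
bound gives `6 * exp 3 / n` no matter how many colors there are. -/

open MeasureTheory ProbabilityTheory Filter Topology

section RealInequalities

lemma exp_sub_one_le_mul_exp (x : ℝ) : Real.exp x - 1 ≤ x * Real.exp x := by
  have h : (-x + 1) * Real.exp x ≤ Real.exp (-x) * Real.exp x := by
    gcongr
    exact Real.add_one_le_exp (-x)
  rw [← Real.exp_add, neg_add_cancel, Real.exp_zero] at h
  linarith

lemma one_add_pow_sub_one_le_mul_exp {x : ℝ} (hx : -1 ≤ x) (n : ℕ) :
    (1 + x) ^ n - 1 ≤ n * x * Real.exp (n * x) :=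
  calc (1 + x) ^ n - 1 ≤ Real.exp x ^ n - 1 := by
        gcongr
        · linarith
        · linarith [Real.add_one_le_exp x]
    _ = Real.exp (n * x) - 1 := by rw [Real.exp_nat_mul]
    _ ≤ n * x * Real.exp (n * x) := exp_sub_one_le_mul_exp _

lemma four_rpow_mul_logb_two {x : ℝ} (hx : 0 < x) (y : ℝ) :
    (4 : ℝ) ^ (y * Real.logb 2 x) = (x ^ 2) ^ y := by
  have h : (4 : ℝ) ^ Real.logb 2 x = x ^ 2 := by
    rw [show (4 : ℝ) = 2 ^ 2 by norm_num, ← Real.rpow_pow_comm zero_le_two,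
      Real.rpow_logb zero_lt_two (by norm_num) hx]
  rw [mul_comm, Real.rpow_mul zero_le_four, h]

lemma exp_mul_div_rpow_sub_one_le {x y z : ℝ} (hy : 2 ≤ y) (hxy : Real.exp x ≤ y) (hz : 1 ≤ z) :
    Real.exp (x * z) / (y ^ z - 1) ≤ 2 * (Real.exp x / y) := by
  have hy_pos : 0 < y := by linarith
  have hyz : 2 ≤ y ^ z := hy.trans (Real.self_le_rpow_of_one_le (by linarith) hz)
  calc Real.exp (x * z) / (y ^ z - 1) ≤ Real.exp (x * z) / (y ^ z / 2) := by
        gcongr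
        linarith
    _ = 2 * (Real.exp x / y) ^ z := by
        rw [Real.exp_mul, Real.div_rpow (Real.exp_pos x).le hy_pos.le]
        ring
    _ ≤ 2 * (Real.exp x / y) := by
        gcongr
        exact Real.rpow_le_self_of_le_one (by positivity) ((div_le_one hy_pos).2 hxy) hz

lemma two_le_of_exp_three_le_sq {n : ℕ} (hn : Real.exp 3 ≤ (n : ℝ) ^ 2) : (2 : ℝ) ≤ n := by
  have h : (2 : ℝ) ^ 2 ≤ (n : ℝ) ^ 2 := by linarith [Real.add_one_le_exp 3]
  exact (pow_le_pow_iff_left₀ zero_le_two n.cast_nonneg two_ne_zero).1 h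

lemma one_add_pow_sub_one_div_le {n : ℕ} (hn : Real.exp 3 ≤ (n : ℝ) ^ 2) {q : ℝ} (hq : 0 ≤ q) :
    ((1 + 3 * q) ^ n - 1) / (4 ^ (max 1 (n * q) * Real.logb 2 n) - 1) ≤
      6 * Real.exp 3 / n * q := by
  set M := max 1 (n * q)
  have hM : 1 ≤ M := le_max_left _ _
  have hn_two : (2 : ℝ) ≤ n := two_le_of_exp_three_le_sq hn
  have hsq : (2 : ℝ) ≤ (n : ℝ) ^ 2 := by nlinarith
  have hpow : 2 ≤ ((n : ℝ) ^ 2) ^ M :=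
    hsq.trans (Real.self_le_rpow_of_one_le (by linarith) hM)
  rw [four_rpow_mul_logb_two (by linarith)]
  calc ((1 + 3 * q) ^ n - 1) / (((n : ℝ) ^ 2) ^ M - 1)
    _ ≤ 3 * (n * q) * Real.exp (3 * (n * q)) / (((n : ℝ) ^ 2) ^ M - 1) := by
        rw [← mul_left_comm (n : ℝ) 3 q]
        gcongr
        · linarith
        · exact one_add_pow_sub_one_le_mul_exp (by linarith) n
    _ ≤ 3 * (n * q) * Real.exp (3 * M) / (((n : ℝ) ^ 2) ^ M - 1) := by
        gcongr
        · linarith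
        · exact le_max_right _ _
    _ = 3 * (n * q) * (Real.exp (3 * M) / (((n : ℝ) ^ 2) ^ M - 1)) := mul_div_assoc _ _ _
    _ ≤ 3 * (n * q) * (2 * (Real.exp 3 / (n : ℝ) ^ 2)) := by
        gcongr
        exact exp_mul_div_rpow_sub_one_le hsq hn hM
    _ = 6 * Real.exp 3 / n * q := by
        field_simp
        ring

lemma le_max_one_mul_iff {v e l : ℝ} :
    v ≤ max 1 e * l ↔ (1 ≤ e → v / e ≤ l) ∧ (e < 1 → v ≤ l) := by
  rcases le_or_gt 1 e with he | he
  · simp [he, he.not_gt, div_le_iff₀' (zero_lt_one.trans_le he)]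
  · simp [he, he.le, he.not_ge]

end RealInequalities

section Measure

lemma sum_measureReal_mul_ite {Ω : Type*} [Fintype Ω] [MeasurableSpace Ω]
    [MeasurableSingletonClass Ω] (P : Measure Ω) [SigmaFinite P] (p : Ω → Prop)
    [DecidablePred p] :
    ∑ ω, P.real {ω} * (if p ω then 1 else 0) = P.real {ω | p ω} := by
  simp only [mul_ite, mul_one, mul_zero, ← Finset.sum_filter, sum_measureReal_singleton,
    Finset.coe_filter, Finset.mem_univ, true_and]

lemma measureReal_pi_singleton {ι : Type*} [Fintype ι] {α : ι → Type*}
    [∀ i, MeasurableSpace (α i)] (μ : ∀ i, Measure (α i)) [∀ i, SigmaFinite (μ i)]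
    (x : ∀ i, α i) : (Measure.pi μ).real {x} = ∏ i, (μ i).real {x i} := by
  simp only [measureReal_def, Measure.pi_singleton, ENNReal.toReal_prod]

lemma measureReal_iUnion_le_of_le_mul_singleton {Ω α : Type*} [MeasurableSpace Ω]
    [MeasurableSpace α] [Countable α] [MeasurableSingletonClass α] {P : Measure Ω}
    [IsFiniteMeasure P] {μ : Measure α} [IsProbabilityMeasure μ] {s : α → Set Ω} {C : ℝ}
    (hC : 0 ≤ C) (hs : ∀ a, P.real (s a) ≤ C * μ.real {a}) : P.real (⋃ a, s a) ≤ C := by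
  refine ENNReal.toReal_le_of_le_ofReal hC ?_
  calc P (⋃ a, s a) ≤ ∑' a, P (s a) := measure_iUnion_le s
    _ ≤ ∑' a, ENNReal.ofReal C * μ {a} := by
        refine ENNReal.tsum_le_tsum fun a => ?_
        rw [← ofReal_measureReal, ← ofReal_measureReal, ← ENNReal.ofReal_mul hC]
        exact ENNReal.ofReal_le_ofReal (hs a)
    _ = ENNReal.ofReal C := by
        have hsum : ∑' a, μ {a} = 1 := by
          simpa using μ.tsum_indicator_apply_singleton Set.univ .univ
        rw [ENNReal.tsum_mul_left, hsum, mul_one]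

end Measure

section Occurrences

variable {ι α : Type*} [Fintype ι] [DecidableEq α]

/-- The number of coordinates at which the sample `x : ι → α` takes the value `a`; this is `V_a`
when `x` lists the colors of the nodes. -/
def occurrences (x : ι → α) (a : α) : ℕ :=
  (Finset.univ.filter fun i => x i = a).card

lemma pow_occurrences {M : Type*} [CommMonoid M] (t : M) (x : ι → α) (a : α) :
    t ^ occurrences x a = ∏ i, if x i = a then t else 1 := by
  rw [occurrences, ← Finset.prod_const, Finset.prod_filter]

variable [MeasurableSpace α] [MeasurableSingletonClass α] (μ : Measure α)

lemma integrable_ite_eq [IsFiniteMeasure μ] (t : ℝ) (a : α) :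
    Integrable (fun b => if b = a then t else 1) μ :=
  .of_bound (Measurable.ite (measurableSet_singleton a) measurable_const
    measurable_const).aestronglyMeasurable (max ‖t‖ 1) <| .of_forall fun b => by
      split_ifs <;> simp

lemma integrable_pow_occurrences [IsFiniteMeasure μ] (t : ℝ) (a : α) :
    Integrable (fun x : ι → α => t ^ occurrences x a) (Measure.pi fun _ => μ) := by
  simp only [pow_occurrences]
  exact Integrable.fintype_prod fun _ => integrable_ite_eq μ t a

variable [IsProbabilityMeasure μ]

lemma integral_ite_eq (t : ℝ) (a : α) :
    ∫ b, (if b = a then t else 1) ∂μ = 1 + (t - 1) * μ.real {a} := by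
  have hsplit (b : α) :
      (if b = a then t else 1) = 1 + ({a} : Set α).indicator (fun _ => t - 1) b := by
    by_cases hb : b = a <;> simp [hb]
  simp only [hsplit]
  rw [integral_add (integrable_const 1)
    ((integrable_const _).indicator (measurableSet_singleton a)),
    integral_indicator_const _ (measurableSet_singleton a)]
  simp [mul_comm]

lemma integral_pow_occurrences (t : ℝ) (a : α) :
    ∫ x : ι → α, t ^ occurrences x a ∂(Measure.pi fun _ => μ) =
      (1 + (t - 1) * μ.real {a}) ^ Fintype.card ι := by
  simp only [pow_occurrences]
  rw [integral_fintype_prod_eq_pow (fun b => if b = a then t else 1), integral_ite_eq]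

lemma measureReal_lt_occurrences_le {s t : ℝ} (hs : 0 < s) (ht : 1 < t) (a : α) :
    (Measure.pi fun _ : ι => μ).real {x | s < occurrences x a} ≤
      ((1 + (t - 1) * μ.real {a}) ^ Fintype.card ι - 1) / (t ^ s - 1) := by
  set P := Measure.pi fun _ : ι => μ
  have hmarkov := mul_meas_ge_le_integral_of_nonneg (μ := P)
    (.of_forall fun x : ι → α => sub_nonneg.2 (one_le_pow₀ ht.le))
    ((integrable_pow_occurrences μ t a).sub (integrable_const 1)) (t ^ s - 1)
  rw [integral_sub (integrable_pow_occurrences μ t a) (integrable_const 1),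
    integral_pow_occurrences, integral_const, probReal_univ, one_smul] at hmarkov
  have hsubset : {x : ι → α | s < occurrences x a} ⊆
      {x | t ^ s - 1 ≤ t ^ occurrences x a - 1} := fun x hx => by
    rw [Set.mem_ofPred_eq, ← Real.rpow_natCast]
    gcongr
    · exact ht.le
    · exact le_of_lt hx
  have hpos : 0 < t ^ s - 1 := sub_pos.2 (Real.one_lt_rpow ht hs)
  rw [le_div_iff₀' hpos]
  exact (mul_le_mul_of_nonneg_left (measureReal_mono hsubset) hpos.le).trans hmarkov

lemma measureReal_max_mul_logb_lt_occurrences_le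
    (hι : Real.exp 3 ≤ (Fintype.card ι : ℝ) ^ 2) (a : α) :
    (Measure.pi fun _ : ι => μ).real
        {x | max 1 (Fintype.card ι * μ.real {a}) * Real.logb 2 (Fintype.card ι) <
          occurrences x a} ≤
      6 * Real.exp 3 / Fintype.card ι * μ.real {a} := by
  have hn : (2 : ℝ) ≤ Fintype.card ι := two_le_of_exp_three_le_sq hι
  have hthreshold :
      0 < max 1 (Fintype.card ι * μ.real {a}) * Real.logb 2 (Fintype.card ι) :=
    mul_pos (zero_lt_one.trans_le (le_max_left _ _)) (Real.logb_pos one_lt_two (by linarith))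
  refine (measureReal_lt_occurrences_le μ hthreshold (t := 4) (by norm_num) a).trans ?_
  rw [show (4 : ℝ) - 1 = 3 by norm_num]
  exact one_add_pow_sub_one_div_le hι measureReal_nonneg

lemma one_sub_le_measureReal_forall_occurrences_le [Countable α]
    (hι : Real.exp 3 ≤ (Fintype.card ι : ℝ) ^ 2) :
    1 - 6 * Real.exp 3 / Fintype.card ι ≤
      (Measure.pi fun _ : ι => μ).real {x | ∀ a, (occurrences x a : ℝ) ≤
        max 1 (Fintype.card ι * μ.real {a}) * Real.logb 2 (Fintype.card ι)} := by
  have hunion := measureReal_iUnion_le_of_le_mul_singleton (by positivity)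
    (measureReal_max_mul_logb_lt_occurrences_le (ι := ι) μ hι)
  rw [← sub_le_sub_iff_left 1, ← probReal_compl_eq_one_sub .of_discrete] at hunion
  simpa only [Set.compl_iUnion, Set.compl_ofPred, not_lt, Set.iInter_ofPred] using hunion

end Occurrences

theorem color_frequency_bound_general {α : ℕ → Type*} [∀ n, Countable (α n)]
    [∀ n, DecidableEq (α n)] [∀ n, MeasurableSpace (α n)] [∀ n, MeasurableSingletonClass (α n)]
    (μ : ∀ n, Measure (α n)) [∀ n, IsProbabilityMeasure (μ n)] :
    Tendsto
      (fun n : ℕ => (Measure.pi fun _ : Fin n => μ n).real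
        {x | ∀ a, (occurrences x a : ℝ) ≤ max 1 (n * (μ n).real {a}) * Real.logb 2 n})
      atTop (𝓝 1) := by
  have hlower : Tendsto (fun n : ℕ => 1 - 6 * Real.exp 3 / (n : ℝ)) atTop (𝓝 1) := by
    simpa using (tendsto_const_div_atTop_nhds_zero_nat (6 * Real.exp 3)).const_sub 1
  have hlarge : ∀ᶠ n : ℕ in atTop, Real.exp 3 ≤ (n : ℝ) ^ 2 :=
    ((tendsto_pow_atTop two_ne_zero).comp
      tendsto_natCast_atTop_atTop).eventually_ge_atTop (Real.exp 3)
  refine tendsto_of_tendsto_of_tendsto_of_le_of_le' hlower tendsto_const_nhds ?_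
    (.of_forall fun n => measureReal_le_one)
  filter_upwards [hlarge] with n hn
  simpa only [Fintype.card_fin] using
    one_sub_le_measureReal_forall_occurrences_le (ι := Fin n) (μ n) (by simpa using hn)

section BinaryDigits

variable {d : ℕ}

lemma sub_one_sub_val_eq_val_rev (k : Fin d) : d - 1 - (k : ℕ) = k.rev := by
  rw [Fin.val_rev]
  lia

lemma natOfBits_eq_sum (b : Fin d → Bool) :
    Nat.ofBits b = ∑ k, if b k then 2 ^ (k : ℕ) else 0 := by
  induction d with
  | zero => rfl
  | succ d ih =>
    rw [Nat.ofBits_succ, ih, Fin.sum_univ_succ, Finset.mul_sum, add_comm]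
    congr 1
    · cases b 0 <;> rfl
    · simp [mul_ite, pow_succ']

/-- The color whose binary digits, most significant first, are the attribute bits `b`. -/
def colorOfBits (b : Fin d → Bool) : ℕ :=
  Nat.ofBits (b ∘ Fin.rev)

lemma testBit_colorOfBits (b : Fin d → Bool) (k : Fin d) :
    (colorOfBits b).testBit (d - 1 - k) = b k := by
  rw [sub_one_sub_val_eq_val_rev, colorOfBits, Nat.testBit_ofBits_lt _ _ k.rev.isLt,
    Function.comp_apply, Fin.eta, Fin.rev_rev]

lemma colorOfBits_injective : Function.Injective (colorOfBits (d := d)) := fun b b' h => by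
  ext k
  rw [← testBit_colorOfBits b, h, testBit_colorOfBits]

lemma forall_mem_range_two_pow_iff {p : ℕ → Prop} :
    (∀ c ∈ Finset.range (2 ^ d), p c) ↔ ∀ b : Fin d → Bool, p (colorOfBits b) := by
  refine ⟨fun h b => h _ (Finset.mem_range.2 (Nat.ofBits_lt_two_pow _)), fun h c hc => ?_⟩
  have hc_code : colorOfBits (fun k : Fin d => c.testBit k.rev) = c := by
    simp only [colorOfBits, Function.comp_def, Fin.rev_rev, Nat.ofBits_testBit,
      Nat.mod_eq_of_lt (Finset.mem_range.1 hc)]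
  exact hc_code ▸ h _

lemma colorOf_eq_colorOfBits {n : ℕ} (ω : Fin n → Fin d → Bool) (i : Fin n) :
    colorOf ω i = colorOfBits (ω i) := by
  rw [colorOf, colorOfBits, natOfBits_eq_sum, ← Equiv.sum_comp Fin.revPerm]
  simp only [sub_one_sub_val_eq_val_rev, Fin.revPerm_apply, Function.comp_apply, Fin.rev_rev]

lemma Vcount_colorOfBits {n : ℕ} (ω : Fin n → Fin d → Bool) (b : Fin d → Bool) :
    Vcount ω (colorOfBits b) = occurrences ω b := by
  simp only [Vcount, occurrences, colorOf_eq_colorOfBits, colorOfBits_injective.eq_iff]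

end BinaryDigits

section BitLaw

variable {d : ℕ} (p : ℕ → unitInterval)

/-- The law of the attribute bits of one node: independent, the `k`-th one Bernoulli(`p k`). -/
noncomputable abbrev bitLaw (d : ℕ) : Measure (Fin d → Bool) :=
  Measure.pi fun k => bernoulliMeasure true false (p k)

lemma measureReal_bitLaw_singleton (b : Fin d → Bool) :
    (bitLaw p d).real {b} = ∏ k : Fin d, if b k then (p k : ℝ) else 1 - p k := by
  rw [measureReal_pi_singleton]
  refine Finset.prod_congr rfl fun k _ => ?_
  rw [bernoulliMeasure_real_apply _ (measurableSet_singleton _)]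
  cases b k <;> simp

lemma bitWeight_eq_measureReal {n : ℕ} (ω : Fin n → Fin d → Bool) :
    bitWeight (fun k => (p k : ℝ)) ω = (Measure.pi fun _ : Fin n => bitLaw p d).real {ω} := by
  simp only [bitWeight, measureReal_pi_singleton (fun _ : Fin n => bitLaw p d),
    measureReal_bitLaw_singleton]

lemma Ecol_colorOfBits (n : ℕ) (b : Fin d → Bool) :
    Ecol n d (fun k => (p k : ℝ)) (colorOfBits b) = n * (bitLaw p d).real {b} := by
  rw [Ecol, measureReal_bitLaw_singleton, ← Fin.prod_univ_eq_prod_range fun k =>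
    (p k : ℝ) ^ (colorOfBits b / 2 ^ (d - 1 - k) % 2) *
      (1 - p k) ^ (1 - colorOfBits b / 2 ^ (d - 1 - k) % 2)]
  congr! 2 with k
  have hdigit : colorOfBits b / 2 ^ (d - 1 - (k : ℕ)) % 2 = (b k).toNat := by
    rw [← testBit_colorOfBits b k, Nat.toNat_testBit]
  rw [hdigit]
  cases b k <;> simp

lemma color_frequencies_le_iff {n : ℕ} (ω : Fin n → Fin d → Bool) (l : ℝ) :
    ((∀ c ∈ (Finset.range (2 ^ d)).filter (fun c => 1 ≤ Ecol n d (fun k => p k) c),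
        (Vcount ω c : ℝ) / Ecol n d (fun k => p k) c ≤ l) ∧
      (∀ c ∈ (Finset.range (2 ^ d)).filter (fun c => Ecol n d (fun k => p k) c < 1),
        (Vcount ω c : ℝ) ≤ l)) ↔
      ∀ b, (occurrences ω b : ℝ) ≤ max 1 (n * (bitLaw p d).real {b}) * l := by
  simp only [Finset.mem_filter, and_imp, forall_mem_range_two_pow_iff, Vcount_colorOfBits,
    Ecol_colorOfBits, le_max_one_mul_iff, forall_and]

end BitLaw

/-- **Bound of color frequencies (Theorem 2 of the paper).**
For each `n`, let the `d n` attribute bits of each of `n` nodes be independent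
Bernoulli(`μ n k`) random variables, let `V_c` be the number of nodes of color
`c`, let `F = {c : E_c ≥ 1}` and `I = {c : E_c < 1}`, and let
`m_F = max_{c∈F} V_c / E_c` and `m_I = max_{c∈I} V_c`.  Then
`P[m_F ≤ log₂ n ∧ m_I ≤ log₂ n] → 1` as `n → ∞`. -/
theorem color_frequency_bound (d : ℕ → ℕ) (hd : ∀ n, 1 ≤ d n)
    (μ : ℕ → ℕ → ℝ) (hμ : ∀ n k, μ n k ∈ Set.Icc (0 : ℝ) 1) :
    Filter.Tendsto
      (fun n : ℕ =>
        ∑ ω : Fin n → Fin (d n) → Bool,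
          bitWeight (μ n) ω *
            if (∀ c ∈ (Finset.range (2 ^ d n)).filter
                    (fun c => 1 ≤ Ecol n (d n) (μ n) c),
                  (Vcount ω c : ℝ) / Ecol n (d n) (μ n) c ≤ Real.logb 2 n) ∧
               (∀ c ∈ (Finset.range (2 ^ d n)).filter
                    (fun c => Ecol n (d n) (μ n) c < 1),
                  (Vcount ω c : ℝ) ≤ Real.logb 2 n)
            then (1 : ℝ) else 0)
      Filter.atTop (nhds 1) := by
  lift μ to ℕ → ℕ → unitInterval using hμ
  simp only [color_frequencies_le_iff, bitWeight_eq_measureReal, sum_measureReal_mul_ite]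
  exact color_frequency_bound_general fun n => bitLaw (μ n) (d n)
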